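/- Let (X,Y) be the preferred well-founded model of an ordered logic program (Π,<) and let (X',Y') be the well-founded model of Π. Then X' ⊆ X and Y' ⊆ Y; that is, lfp(A_Π) ⊆ lfp(A°_{(Π,<)}) and Lit∖C_Π(lfp(A_Π)) ⊆ Lit∖C_Π(lfp(A°_{(Π,<)})). -/

import Mathlib

open scoped Classical

/-- A literal: an atom `A` or its classical negation `¬A`. -/
inductive Lit (α : Type) : Type
  | pos : α → Lit α
  | neg : α → Lit α

/-- A rule with a head literal and finite positive and negative bodies. -/
structure Rule (α : Type) where
  head : Lit α
  pbody : Finset (Lit α)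
  nbody : Finset (Lit α)

/-- A program is a set of rules (finiteness is stated as a hypothesis). -/
abbrev Program (α : Type) := Set (Rule α)

/-- `X` is consistent if it contains no complementary pair. -/
def Consistent {α : Type} (X : Set (Lit α)) : Prop :=
  ¬ ∃ A : α, Lit.pos A ∈ X ∧ Lit.neg A ∈ X

/-- `X` is logically closed if it is consistent or equals the set of all literals. -/
def LogClosed {α : Type} (X : Set (Lit α)) : Prop :=
  Consistent X ∨ X = Set.univ

/-- `X` is closed under (basic) program `P`. -/
def ClosedUnder {α : Type} (P : Program α) (X : Set (Lit α)) : Prop :=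
  ∀ r ∈ P, ↑r.pbody ⊆ X → r.head ∈ X

/-- `Cn P` : the smallest logically closed set closed under basic program `P`. -/
def Cn {α : Type} (P : Program α) : Set (Lit α) :=
  ⋂₀ {X | LogClosed X ∧ ClosedUnder P X}

/-- The reduct of `P` relative to `X`. -/
def reduct {α : Type} (P : Program α) (X : Set (Lit α)) : Program α :=
  {s | ∃ r ∈ P, (↑r.nbody ∩ X = (∅ : Set (Lit α))) ∧ s = ⟨r.head, r.pbody, ∅⟩}

/-- A program is basic if all its rules have empty negative body. -/
def IsBasic {α : Type} (P : Program α) : Prop := ∀ r ∈ P, r.nbody = ∅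

/-- `C_Π(X) = Cn(Π^X)`. -/
noncomputable def Cop {α : Type} (P : Program α) (X : Set (Lit α)) : Set (Lit α) :=
  Cn (reduct P X)

/-- `A_Π(X) = C_Π(C_Π(X))`. -/
noncomputable def Aop {α : Type} (P : Program α) (X : Set (Lit α)) : Set (Lit α) :=
  Cop P (Cop P X)

/-- `X` is an answer set of `P` iff `Cn(P^X) = X`. -/
def AnswerSet {α : Type} (P : Program α) (X : Set (Lit α)) : Prop :=
  Cn (reduct P X) = X

/-- Immediate consequence operator for a basic program. -/
noncomputable def T {α : Type} (P : Program α) (X : Set (Lit α)) : Set (Lit α) :=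
  if Consistent X then {L | ∃ r ∈ P, ↑r.pbody ⊆ X ∧ L = r.head} else Set.univ

/-- `r` is active wrt `(X, Y)`. -/
def Active {α : Type} (r : Rule α) (X Y : Set (Lit α)) : Prop :=
  ↑r.pbody ⊆ X ∧ ↑r.nbody ∩ Y = (∅ : Set (Lit α))

/-- Extended immediate consequence operator `T_{Π,Y}(X)`. -/
noncomputable def TE {α : Type} (P : Program α) (Y X : Set (Lit α)) : Set (Lit α) :=
  if Consistent X then {L | ∃ r ∈ P, Active r X Y ∧ L = r.head} else Set.univ

/-- Preference-sensitive operator `T_{(Π,<),Y}(X)` (Definition 1). -/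
noncomputable def TP {α : Type} (P : Program α) (lt : Rule α → Rule α → Prop)
    (Y X : Set (Lit α)) : Set (Lit α) :=
  if Consistent X then
    {L | ∃ r ∈ P, Active r X Y ∧
      (¬ ∃ r' ∈ P, lt r r' ∧ Active r' Y X ∧ r'.head ∉ X) ∧ L = r.head}
  else Set.univ

/-- `C_{(Π,<)}(X)` (Definition 2). -/
noncomputable def CP {α : Type} (P : Program α) (lt : Rule α → Rule α → Prop)
    (X : Set (Lit α)) : Set (Lit α) :=
  ⋃ i : ℕ, (TP P lt X)^[i] ∅

/-- `A_{(Π,<)}(X) = C_{(Π,<)}(C_{(Π,<)}(X))`. -/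
noncomputable def AP {α : Type} (P : Program α) (lt : Rule α → Rule α → Prop)
    (X : Set (Lit α)) : Set (Lit α) :=
  CP P lt (CP P lt X)

/-- The set `D^r_{(X,Y)}` of removable literals. -/
def D {α : Type} (P : Program α) (lt : Rule α → Rule α → Prop) (r : Rule α)
    (X Y : Set (Lit α)) : Set (Lit α) :=
  {L | ∀ r' ∈ P, r'.head = L → ↑r'.pbody ⊆ Y →
      lt r' r ∧ ({r.head} ∪ X) ∩ ↑r'.nbody ≠ (∅ : Set (Lit α))}

/-- `T°_{(Π,<),Y}(X)` (Definition 3). -/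
noncomputable def TN {α : Type} (P : Program α) (lt : Rule α → Rule α → Prop)
    (Y X : Set (Lit α)) : Set (Lit α) :=
  if Consistent X then
    {L | ∃ r ∈ P, Active r X (Y \ D P lt r X Y) ∧ L = r.head}
  else Set.univ

/-- `C°_{(Π,<)}(X)` (Definition 4). -/
noncomputable def CN {α : Type} (P : Program α) (lt : Rule α → Rule α → Prop)
    (X : Set (Lit α)) : Set (Lit α) :=
  ⋃ i : ℕ, (TN P lt X)^[i] ∅

/-- `A°_{(Π,<)}(X) = C°_{(Π,<)}(C_Π(X))`. -/
noncomputable def AN {α : Type} (P : Program α) (lt : Rule α → Rule α → Prop)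
    (X : Set (Lit α)) : Set (Lit α) :=
  CN P lt (Cop P X)

/-!
Discarding the literals of `D^r` from `Y` only makes it easier for `r` to be active, so every rule
surviving in the reduct `Π^Y` also fires in `T°`. Hence `C_Π(Y) ⊆ C°(Y)`, and taking `Y = C_Π(X)`
gives `A_Π(X) ⊆ A°(X)`. A fixpoint of `A°` is therefore a prefixed point of the monotone operator
`A_Π`, and contains its least fixpoint by Knaster–Tarski. The second components compare because
`C_Π` is antitone.
-/

theorem isLeast_fixedPoints_le_of_map_le {β : Type*} [CompleteLattice β] {f : β → β} {a b : β}
    (hf : Monotone f) (ha : IsLeast (Function.fixedPoints f) a) (hb : f b ≤ b) : a ≤ b := by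
  have ha_lfp : a = OrderHom.lfp ⟨f, hf⟩ := ha.unique (OrderHom.isLeast_lfp ⟨f, hf⟩)
  exact ha_lfp ▸ OrderHom.lfp_le ⟨f, hf⟩ hb

section

variable {α : Type}

theorem Consistent.subset {X Y : Set (Lit α)} (hY : Consistent Y) (h : X ⊆ Y) : Consistent X :=
  fun ⟨A, hpos, hneg⟩ => hY ⟨A, h hpos, h hneg⟩

theorem Consistent.iUnion {ι : Sort*} {s : ι → Set (Lit α)} (hs : Directed (· ⊆ ·) s)
    (h : ∀ i, Consistent (s i)) : Consistent (⋃ i, s i) := by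
  rintro ⟨A, hpos, hneg⟩
  obtain ⟨i, hi⟩ := Set.mem_iUnion.1 hpos
  obtain ⟨j, hj⟩ := Set.mem_iUnion.1 hneg
  obtain ⟨k, hik, hjk⟩ := hs i j
  exact h k ⟨A, hik hi, hjk hj⟩

theorem ClosedUnder.subset {P Q : Program α} {X : Set (Lit α)} (hQ : ClosedUnder Q X)
    (h : P ⊆ Q) : ClosedUnder P X :=
  fun r hr => hQ r (h hr)

theorem Cn_monotone : Monotone (Cn : Program α → Set (Lit α)) :=
  fun _ _ h => Set.sInter_subset_sInter fun _ hX => ⟨hX.1, hX.2.subset h⟩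

theorem Cn_subset {P : Program α} {X : Set (Lit α)} (hlog : LogClosed X)
    (hclosed : ClosedUnder P X) : Cn P ⊆ X :=
  Set.sInter_subset_of_mem ⟨hlog, hclosed⟩

theorem Active.mono {r : Rule α} {X X' Y Y' : Set (Lit α)} (h : Active r X Y) (hX : X ⊆ X')
    (hY : Y' ⊆ Y) : Active r X' Y' :=
  ⟨h.1.trans hX, Set.subset_eq_empty (Set.inter_subset_inter_right _ hY) h.2⟩

theorem reduct_antitone (P : Program α) : Antitone (reduct P) := by
  rintro X Y h _ ⟨r, hr, hn, rfl⟩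
  exact ⟨r, hr, Set.subset_eq_empty (Set.inter_subset_inter_right _ h) hn, rfl⟩

theorem Cop_antitone (P : Program α) : Antitone (Cop P) :=
  Cn_monotone.comp_antitone (reduct_antitone P)

theorem Aop_monotone (P : Program α) : Monotone (Aop P) :=
  (Cop_antitone P).comp (Cop_antitone P)

variable (P : Program α) (lt : Rule α → Rule α → Prop)

theorem D_monotone_left (r : Rule α) (Y : Set (Lit α)) : Monotone fun X => D P lt r X Y := by
  intro X X' h L hL r' hr' hhead hbody
  obtain ⟨hlt, hdefeated⟩ := hL r' hr' hhead hbody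
  exact ⟨hlt, fun hempty => hdefeated (Set.subset_eq_empty
    (Set.inter_subset_inter_left _ (Set.union_subset_union_right _ h)) hempty)⟩

theorem TN_of_not_consistent (Y : Set (Lit α)) {X : Set (Lit α)} (hX : ¬ Consistent X) :
    TN P lt Y X = Set.univ :=
  if_neg hX

variable {P} in
theorem head_mem_TN {r : Rule α} {X Y : Set (Lit α)} (hr : r ∈ P)
    (h : Active r X (Y \ D P lt r X Y)) : r.head ∈ TN P lt Y X := by
  by_cases hX : Consistent X
  · rw [TN, if_pos hX]
    exact ⟨r, hr, h, rfl⟩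
  · exact TN_of_not_consistent P lt Y hX ▸ Set.mem_univ _

theorem TN_monotone (Y : Set (Lit α)) : Monotone (TN P lt Y) := by
  intro X X' h
  by_cases hX' : Consistent X'
  · rw [TN, if_pos (hX'.subset h)]
    rintro _ ⟨r, hr, hactive, rfl⟩
    exact head_mem_TN lt hr
      (hactive.mono h (Set.sdiff_subset_sdiff_right (D_monotone_left P lt r Y h)))
  · exact TN_of_not_consistent P lt Y hX' ▸ Set.subset_univ _

theorem TN_iterate_monotone (Y : Set (Lit α)) : Monotone fun i => (TN P lt Y)^[i] ∅ :=
  (TN_monotone P lt Y).monotone_iterate_of_le_map (Set.empty_subset _)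

theorem TN_iterate_subset_CN (Y : Set (Lit α)) (i : ℕ) : (TN P lt Y)^[i] ∅ ⊆ CN P lt Y :=
  Set.subset_iUnion (fun i => (TN P lt Y)^[i] ∅) i

theorem logClosed_CN (Y : Set (Lit α)) : LogClosed (CN P lt Y) := by
  by_cases h : ∀ i, Consistent ((TN P lt Y)^[i] ∅)
  · exact Or.inl (Consistent.iUnion (TN_iterate_monotone P lt Y).directed_le h)
  · obtain ⟨i, hi⟩ := not_forall.1 h
    have hsucc : (TN P lt Y)^[i + 1] ∅ = Set.univ := by
      rw [Function.iterate_succ_apply', TN_of_not_consistent P lt Y hi]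
    exact Or.inr (Set.univ_subset_iff.1 (hsucc ▸ TN_iterate_subset_CN P lt Y (i + 1)))

theorem closedUnder_reduct_CN (Y : Set (Lit α)) : ClosedUnder (reduct P Y) (CN P lt Y) := by
  rintro _ ⟨r, hr, hn, rfl⟩ hp
  -- The body of `r` is finite, so a single stage of the iteration already contains it.
  obtain ⟨i, hi⟩ : ∃ i, ↑r.pbody ⊆ (TN P lt Y)^[i] ∅ :=
    (TN_iterate_monotone P lt Y).directed_le.exists_mem_subset_of_finset_subset_biUnion hp
  have hactive : Active r ((TN P lt Y)^[i] ∅) Y := ⟨hi, hn⟩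
  have hhead : r.head ∈ (TN P lt Y)^[i + 1] ∅ := by
    rw [Function.iterate_succ_apply']
    exact head_mem_TN lt hr (hactive.mono subset_rfl Set.sdiff_subset)
  exact TN_iterate_subset_CN P lt Y (i + 1) hhead

theorem Cop_subset_CN (Y : Set (Lit α)) : Cop P Y ⊆ CN P lt Y :=
  Cn_subset (logClosed_CN P lt Y) (closedUnder_reduct_CN P lt Y)

theorem Aop_subset_AN (X : Set (Lit α)) : Aop P X ⊆ AN P lt X :=
  Cop_subset_CN P lt (Cop P X)

theorem wfm_subset_preferred_wfm_general {X W : Set (Lit α)} (hX : AN P lt X ⊆ X)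
    (hW : IsLeast (Function.fixedPoints (Aop P)) W) :
    W ⊆ X ∧ (Set.univ \ Cop P W) ⊆ (Set.univ \ Cop P X) := by
  have hWX : W ⊆ X :=
    isLeast_fixedPoints_le_of_map_le (Aop_monotone P) hW ((Aop_subset_AN P lt X).trans hX)
  exact ⟨hWX, Set.sdiff_subset_sdiff_right (Cop_antitone P hWX)⟩

end

/-- Theorem 3.1: the standard well-founded model is contained
componentwise in the preferred well-founded model. -/
theorem wfm_subset_preferred_wfm {α : Type} (P : Program α) (hfin : P.Finite)
    (lt : Rule α → Rule α → Prop)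
    (hirr : ∀ r, ¬ lt r r) (htrans : ∀ r₁ r₂ r₃, lt r₁ r₂ → lt r₂ r₃ → lt r₁ r₃)
    (X W : Set (Lit α))
    (hX : AN P lt X = X ∧ ∀ Z, AN P lt Z = Z → X ⊆ Z)
    (hW : Aop P W = W ∧ ∀ Z, Aop P Z = Z → W ⊆ Z) :
    W ⊆ X ∧ (Set.univ \ Cop P W) ⊆ (Set.univ \ Cop P X) :=
  wfm_subset_preferred_wfm_general P lt hX.1.subset ⟨hW.1, fun Z hZ => hW.2 Z hZ⟩
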